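/- There exists a constant c > 0 with the following property. Let m, n be positive integers, p ∈ [0, 1/2], and δ > 0 with p·δ² ≤ c. Define K := {θ ∈ [-1/2,1/2)^m : d₂(θ,Λ) ≥ δ}. Let A ∈ {0,1}^{m×n} be a random matrix with independent entries satisfying Pr[A_{ij} = 1] = p. Then with probability at least 1 - exp(-(1/96)·p·δ²·n) (over A), one has ∫_{θ ∈ K} |∏_{j=1}^n cos(2π·⟨A^j,θ⟩)| dθ ≤ exp(-(1/24)·p·δ²·n). -/

import Mathlib

open Real MeasureTheory
open scoped Classical

/-!
The proof is a first-moment computation followed by Markov's inequality. The columns of `A` are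
i.i.d., so the expectation of `|∏ j cos (2π⟨A^j, θ⟩)|` is the `n`-th power of
`E |cos (2π⟨b, θ⟩)|` for one random column `b`. From `|cos x| ≤ 3/4 + cos (2x) / 4` and the fact
that `E cos (4π⟨b, θ⟩)` is the real part of `∏ i (1 - p + p exp (4πi θ_i))`, whose factors have
modulus at most `exp (-16 p dist(θ_i, ½ℤ)²)` by Jordan's inequality (`norm_factor_le`), one gets
`E |cos (2π⟨b, θ⟩)| ≤ 3/4 + exp (-16 p δ²) / 4 ≤ exp (-(5/96) p δ²)` for `θ ∈ K` once
`p δ² ≤ 1/16` (`column_bound`). As `K` has volume at most `1`, the expected integral is at most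
`exp (-(5/96) p δ² n)`, and `5/96 = 1/24 + 1/96` splits this between the threshold and the
failure probability.
-/

lemma abs_cos_le (x : ℝ) : |cos x| ≤ 3 / 4 + cos (2 * x) / 4 := by
  rw [cos_two_mul, ← sq_abs (cos x)]
  nlinarith [sq_nonneg (|cos x| - 1)]

lemma exists_near (x : ℝ) (hx : x ∈ Set.Ico (-(1 / 2) : ℝ) (1 / 2)) :
    ∃ s ∈ ({-(1 / 2), 0, 1 / 2} : Finset ℝ), |x - s| ≤ 1 / 4 := by
  obtain ⟨h1, h2⟩ := hx
  by_cases h3 : x < -(1 / 4)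
  · exact ⟨-(1 / 2), by simp, by rw [abs_le]; constructor <;> linarith⟩
  by_cases h4 : x ≤ 1 / 4
  · exact ⟨0, by simp, by rw [abs_le]; constructor <;> linarith⟩
  · exact ⟨1 / 2, by simp, by rw [abs_le]; constructor <;> linarith⟩

lemma sin_sq_ge (x s : ℝ) (hs : s ∈ ({-(1 / 2), 0, 1 / 2} : Finset ℝ)) (h : |x - s| ≤ 1 / 4) :
    16 * (x - s) ^ 2 ≤ sin (2 * π * x) ^ 2 := by
  have hper : sin (2 * π * x) ^ 2 = sin (2 * π * (x - s)) ^ 2 := by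
    simp only [Finset.mem_insert, Finset.mem_singleton] at hs
    rcases hs with rfl | rfl | rfl
    · rw [show 2 * π * (x - -(1 / 2)) = 2 * π * x + π by ring, sin_add_pi]; ring
    · simp
    · rw [show 2 * π * (x - 1 / 2) = 2 * π * x - π by ring, sin_sub_pi]; ring
  rw [hper]
  have key : 4 * |x - s| ≤ sin (2 * π * |x - s|) := by
    have := mul_le_sin (x := 2 * π * |x - s|) (by positivity) (by nlinarith [pi_pos])
    calc 4 * |x - s| = 2 / π * (2 * π * |x - s|) := by field_simp; ring
      _ ≤ _ := this
  have hsq : sin (2 * π * (x - s)) ^ 2 = sin (2 * π * |x - s|) ^ 2 := by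
    rcases abs_cases (x - s) with ⟨h, _⟩ | ⟨h, _⟩ <;> rw [h]
    rw [mul_neg, sin_neg, neg_sq]
  rw [hsq, ← sq_abs (x - s)]
  nlinarith [abs_nonneg (x - s)]

/-- Modulus of the characteristic function of a Bernoulli variable at frequency `4πx`. -/
lemma norm_factor_le (p x d : ℝ) (hp : 0 ≤ p) (hp2 : p ≤ 1 / 2)
    (h : 16 * d ^ 2 ≤ sin (2 * π * x) ^ 2) :
    ‖(1 - p : ℂ) + p * Complex.exp ((4 * π * x : ℝ) * Complex.I)‖ ≤ exp (-(16 * p * d ^ 2)) := by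
  apply le_of_sq_le_sq _ (exp_pos _).le
  have e1 : ‖(1 - p : ℂ) + p * Complex.exp ((4 * π * x : ℝ) * Complex.I)‖ ^ 2
      = 1 - 4 * p * (1 - p) * sin (2 * π * x) ^ 2 := by
    rw [← Complex.normSq_eq_norm_sq, Complex.normSq_apply]
    simp only [Complex.add_re, Complex.add_im, Complex.sub_re, Complex.sub_im, Complex.one_re,
      Complex.one_im, Complex.ofReal_re, Complex.ofReal_im, Complex.re_ofReal_mul,
      Complex.im_ofReal_mul, Complex.exp_ofReal_mul_I_re, Complex.exp_ofReal_mul_I_im]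
    have h1 : cos (4 * π * x) = 1 - 2 * sin (2 * π * x) ^ 2 := by
      rw [show 4 * π * x = 2 * (2 * π * x) by ring, cos_two_mul, cos_sq']; ring
    have h2 := sin_sq_add_cos_sq (4 * π * x)
    linear_combination p ^ 2 * h2 + 2 * p * (1 - p) * h1
  rw [e1, ← exp_nat_mul]
  refine le_trans ?_ (add_one_le_exp _)
  push_cast
  have := mul_le_mul_of_nonneg_left h hp
  have h3 : 0 ≤ p * (1 - 2 * p) * sin (2 * π * x) ^ 2 :=
    mul_nonneg (mul_nonneg hp (by linarith)) (sq_nonneg _)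
  nlinarith

lemma sum_prod_bool {R : Type*} [CommRing R] {m : ℕ} (f : Fin m → Bool → R) :
    ∑ b : Fin m → Bool, ∏ i, f i (b i) = ∏ i, (f i true + f i false) := by
  have := Finset.prod_univ_sum (fun _ : Fin m => (Finset.univ : Finset Bool)) f
  rw [Fintype.piFinset_univ] at this
  rw [← this]
  simp

lemma sum_weight {m : ℕ} (p : ℝ) :
    ∑ b : Fin m → Bool, ∏ i, (if b i then p else 1 - p) = 1 := by
  rw [sum_prod_bool (fun _ c => if c then p else 1 - p)]
  simp

lemma sum_cos_eq {m : ℕ} (p : ℝ) (θ : Fin m → ℝ) :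
    ∑ b : Fin m → Bool, (∏ i, (if b i then p else 1 - p)) *
      cos (2 * (2 * π * ∑ i, if b i then θ i else 0)) =
    (∏ i, ((1 - p : ℂ) + p * Complex.exp ((4 * π * θ i : ℝ) * Complex.I))).re := by
  have h := sum_prod_bool (fun (i : Fin m) (c : Bool) => if c then
    (p : ℂ) * Complex.exp ((4 * π * θ i : ℝ) * Complex.I) else (1 - p : ℂ))
  simp only [if_true, Bool.false_eq_true, if_false] at h
  simp only [add_comm (1 - p : ℂ)]
  rw [← h, Complex.re_sum]
  refine Finset.sum_congr rfl fun b _ => ?_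
  have e : ∀ i, (if b i then (p : ℂ) * Complex.exp ((4 * π * θ i : ℝ) * Complex.I)
      else (1 - p : ℂ)) = ((if b i then p else 1 - p : ℝ) : ℂ) *
        Complex.exp ((4 * π * (if b i then θ i else 0) : ℝ) * Complex.I) := by
    intro i
    cases b i <;> simp
  rw [Finset.prod_congr rfl fun i _ => e i, Finset.prod_mul_distrib, ← Complex.ofReal_prod,
    ← Complex.exp_sum, ← Finset.sum_mul, ← Complex.ofReal_sum, Complex.re_ofReal_mul,
    Complex.exp_ofReal_mul_I_re, ← Finset.mul_sum]
  congr 2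
  ring

/-- The expectation of `|cos (2π⟨b, θ⟩)|` over one random column `b`, for `θ ∈ K`. -/
lemma column_bound {m : ℕ} (p δ : ℝ) (hp : 0 ≤ p) (hp2 : p ≤ 1 / 2) (hδ : 0 < δ)
    (hc : p * δ ^ 2 ≤ 1 / 16) (θ : Fin m → ℝ) (hθ : ∀ i, θ i ∈ Set.Ico (-(1 / 2) : ℝ) (1 / 2))
    (hs : ∀ s ∈ Fintype.piFinset fun _ : Fin m => ({-(1 / 2), 0, 1 / 2} : Finset ℝ),
                δ ≤ Real.sqrt (∑ i, (θ i - s i) ^ 2)) :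
    ∑ b : Fin m → Bool, (∏ i, (if b i then p else 1 - p)) *
      |cos (2 * π * ∑ i, if b i then θ i else 0)| ≤ exp (-(5 / 96) * (p * δ ^ 2)) := by
  choose s hsm hsd using fun i => exists_near (θ i) (hθ i)
  have hd : δ ^ 2 ≤ ∑ i, (θ i - s i) ^ 2 := by
    have h1 := hs s (by simpa [Fintype.mem_piFinset] using hsm)
    exact (Real.le_sqrt' hδ).1 h1
  have hprod : (∏ i, ((1 - p : ℂ) + p * Complex.exp ((4 * π * θ i : ℝ) * Complex.I))).re
      ≤ exp (-(16 * (p * δ ^ 2))) := by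
    refine (Complex.re_le_norm _).trans ?_
    rw [norm_prod]
    refine (Finset.prod_le_prod (fun i _ => norm_nonneg _) fun i _ =>
      norm_factor_le p (θ i) (θ i - s i) hp hp2 (sin_sq_ge _ _ (hsm i) (hsd i))).trans ?_
    rw [← exp_sum, exp_le_exp, Finset.sum_neg_distrib, ← Finset.mul_sum]
    nlinarith [mul_le_mul_of_nonneg_left hd hp]
  have hw : ∀ b : Fin m → Bool, 0 ≤ ∏ i, (if b i then p else 1 - p) := fun b =>
    Finset.prod_nonneg fun i _ => by split_ifs <;> linarith
  calc _ ≤ ∑ b : Fin m → Bool, (∏ i, (if b i then p else 1 - p)) *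
        (3 / 4 + cos (2 * (2 * π * ∑ i, if b i then θ i else 0)) / 4) :=
        Finset.sum_le_sum fun b _ => mul_le_mul_of_nonneg_left (abs_cos_le _) (hw b)
    _ = 3 / 4 * (∑ b : Fin m → Bool, ∏ i, (if b i then p else 1 - p)) +
        (∑ b : Fin m → Bool, (∏ i, (if b i then p else 1 - p)) *
          cos (2 * (2 * π * ∑ i, if b i then θ i else 0))) / 4 := by
        rw [Finset.mul_sum, Finset.sum_div, ← Finset.sum_add_distrib]
        exact Finset.sum_congr rfl fun b _ => by ring
    _ ≤ 3 / 4 + exp (-(16 * (p * δ ^ 2))) / 4 := by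
        rw [sum_weight, sum_cos_eq]; linarith
    _ ≤ _ := by
        set t := p * δ ^ 2
        have ht : 0 ≤ t := by positivity
        -- `exp (-u) ≤ 1 / (1 + u) ≤ 1 - u / 2` for `0 ≤ u ≤ 1`
        have h1 : exp (-(16 * t)) ≤ 1 - 8 * t := by
          rw [exp_neg]
          have h2 := add_one_le_exp (16 * t)
          refine inv_le_of_inv_le₀ (by linarith) ?_
          refine le_trans ?_ h2
          rw [inv_le_iff_one_le_mul₀ (by linarith)]
          nlinarith
        have h3 := add_one_le_exp (-(5 / 96) * t)
        linarith

lemma sum_matrix_eq {m n : ℕ} (g : (Fin m → Bool) → ℝ) (p : ℝ) :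
    ∑ a : Fin m → Fin n → Bool, (∏ i, ∏ j, (if a i j then p else 1 - p)) *
      ∏ j, g (fun i => a i j) =
    (∑ b : Fin m → Bool, (∏ i, (if b i then p else 1 - p)) * g b) ^ n := by
  rw [Fintype.sum_pow]
  refine Fintype.sum_equiv (Equiv.piComm _) _ _ fun a => ?_
  rw [Finset.prod_comm, ← Finset.prod_mul_distrib]
  rfl

/-- There is `c > 0` such that for `p ∈ [0,1/2]`, `δ > 0` with `pδ² ≤ c`, and
`A ∈ {0,1}^{m×n}` with independent `Bernoulli(p)` entries: with probability at
least `1 - exp(-(1/96)pδ²n)` one has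
`∫_{θ ∈ [-1/2,1/2)^m : d₂(θ,Λ) ≥ δ} |∏_j cos(2π⟨A^j,θ⟩)| dθ ≤ exp(-(1/24)pδ²n)`,
where `Λ = {-1/2,0,1/2}^m` and `d₂(θ,Λ) ≥ δ` is expressed as `‖θ-s‖₂ ≥ δ` for all `s ∈ Λ`. -/
theorem stmt_18 : ∃ c : ℝ, 0 < c ∧
    ∀ (m n : ℕ), 0 < m → 0 < n → ∀ p : ℝ, 0 ≤ p → p ≤ 1 / 2 →
    ∀ δ : ℝ, 0 < δ → p * δ ^ 2 ≤ c →
    ∑ a ∈ Finset.univ.filter (fun a : Fin m → Fin n → Bool =>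
          (∫ θ in {θ : Fin m → ℝ |
              (∀ i, θ i ∈ Set.Ico (-(1 / 2) : ℝ) (1 / 2)) ∧
              ∀ s ∈ Fintype.piFinset fun _ : Fin m => ({-(1 / 2), 0, 1 / 2} : Finset ℝ),
                δ ≤ Real.sqrt (∑ i, (θ i - s i) ^ 2)},
              |∏ j, Real.cos (2 * π * ∑ i, if a i j then θ i else 0)|) ≤
            Real.exp (-(1 / 24) * p * δ ^ 2 * n)),
        ∏ i, ∏ j, (if a i j then p else 1 - p) ≥
      1 - Real.exp (-(1 / 96) * p * δ ^ 2 * n) := by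
  refine ⟨1 / 16, by norm_num, fun m n _ _ p hp hp2 δ hδ hc => ?_⟩
  set K : Set (Fin m → ℝ) := {θ : Fin m → ℝ |
              (∀ i, θ i ∈ Set.Ico (-(1 / 2) : ℝ) (1 / 2)) ∧
              ∀ s ∈ Fintype.piFinset fun _ : Fin m => ({-(1 / 2), 0, 1 / 2} : Finset ℝ),
                δ ≤ Real.sqrt (∑ i, (θ i - s i) ^ 2)} with hK
  set F : (Fin m → Fin n → Bool) → (Fin m → ℝ) → ℝ := fun a θ =>
    |∏ j, Real.cos (2 * π * ∑ i, if a i j then θ i else 0)| with hF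
  set w : (Fin m → Fin n → Bool) → ℝ := fun a => ∏ i, ∏ j, (if a i j then p else 1 - p) with hw
  set T := exp (-(1 / 24) * p * δ ^ 2 * n) with hT
  change ∑ a ∈ Finset.univ.filter (fun a => ∫ θ in K, F a θ ≤ T), w a ≥ _
  have hw0 : ∀ a, 0 ≤ w a := fun a => Finset.prod_nonneg fun i _ =>
    Finset.prod_nonneg fun j _ => by split_ifs <;> linarith
  have hw1 : ∑ a, w a = 1 := by
    have := sum_matrix_eq (m := m) (n := n) (fun _ => 1) p
    simpa [sum_weight] using this
  have hKsub : K ⊆ Set.pi Set.univ fun _ : Fin m => Set.Ico (-(1 / 2) : ℝ) (1 / 2) :=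
    fun θ h i _ => h.1 i
  have hvol : volume K ≤ 1 := by
    refine (measure_mono hKsub).trans ?_
    rw [Real.volume_pi_Ico]
    norm_num
  have hvol' : volume K < ⊤ := hvol.trans_lt ENNReal.one_lt_top
  have hKm : MeasurableSet K := by
    have h1 : MeasurableSet {θ : Fin m → ℝ | ∀ i, θ i ∈ Set.Ico (-(1 / 2) : ℝ) (1 / 2)} := by
      rw [Set.ofPred_forall]
      exact MeasurableSet.iInter fun i => measurable_pi_apply i measurableSet_Ico
    have h2 : IsClosed {θ : Fin m → ℝ | ∀ s ∈ Fintype.piFinset fun _ : Fin m =>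
        ({-(1 / 2), 0, 1 / 2} : Finset ℝ), δ ≤ Real.sqrt (∑ i, (θ i - s i) ^ 2)} := by
      simp only [Set.ofPred_forall]
      exact isClosed_iInter fun s => isClosed_iInter fun _ =>
        isClosed_le continuous_const (by fun_prop)
    exact h1.inter h2.measurableSet
  have hFc : ∀ a, Continuous (F a) := by
    intro a
    have h : ∀ i j, Continuous fun θ : Fin m → ℝ => if a i j then θ i else 0 := by
      intro i j
      cases a i j <;> simp <;> fun_prop
    simp only [hF]
    fun_prop
  have hF1 : ∀ a θ, F a θ ≤ 1 := by
    intro a θ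
    simp only [hF, Finset.abs_prod]
    exact Finset.prod_le_one (fun _ _ => abs_nonneg _) fun _ _ => abs_cos_le_one _
  have hF0 : ∀ a θ, 0 ≤ F a θ := fun a θ => abs_nonneg _
  have hFi : ∀ a, IntegrableOn (F a) K := fun a =>
    Measure.integrableOn_of_bounded (M := 1) hvol'.ne (hFc a).aestronglyMeasurable
      (Filter.Eventually.of_forall fun θ => by
        rw [Real.norm_of_nonneg (hF0 a θ)]; exact hF1 a θ)
  have hmean : ∑ a, w a * ∫ θ in K, F a θ ≤ exp (-(5 / 96) * (p * δ ^ 2)) ^ n := by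
    have e : ∑ a, w a * ∫ θ in K, F a θ = ∫ θ in K, ∑ a, w a * F a θ := by
      rw [integral_finsetSum _ fun a _ => (hFi a).const_mul (w a)]
      simp only [integral_const_mul]
    rw [e]
    have hpt : ∀ θ ∈ K, ∑ a, w a * F a θ ≤ exp (-(5 / 96) * (p * δ ^ 2)) ^ n := by
      intro θ hθ
      have := sum_matrix_eq (n := n)
        (fun b : Fin m → Bool => |cos (2 * π * ∑ i, if b i then θ i else 0)|) p
      simp only [hw, hF, Finset.abs_prod]
      rw [this]
      refine pow_le_pow_left₀ (Finset.sum_nonneg fun b _ => mul_nonneg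
        (Finset.prod_nonneg fun i _ => by split_ifs <;> linarith) (abs_nonneg _)) ?_ n
      exact column_bound p δ hp hp2 hδ hc θ hθ.1 hθ.2
    calc _ ≤ ∫ θ in K, exp (-(5 / 96) * (p * δ ^ 2)) ^ n :=
          setIntegral_mono_on (integrable_finsetSum _ fun a _ => (hFi a).const_mul (w a))
            (integrableOn_const hvol'.ne) hKm hpt
      _ = volume.real K * exp (-(5 / 96) * (p * δ ^ 2)) ^ n := by
          rw [setIntegral_const, smul_eq_mul]
      _ ≤ 1 * exp (-(5 / 96) * (p * δ ^ 2)) ^ n := by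
          gcongr
          exact ENNReal.toReal_le_of_le_ofReal zero_le_one (by simpa using hvol)
      _ = _ := one_mul _
  have hsplit := Finset.sum_filter_add_sum_filter_not Finset.univ
    (fun a => ∫ θ in K, F a θ ≤ T) w
  rw [hw1] at hsplit
  -- Markov: on each bad matrix the integral exceeds `T`
  have hbad : T * ∑ a ∈ Finset.univ.filter (fun a => ¬ ∫ θ in K, F a θ ≤ T), w a ≤
      exp (-(5 / 96) * (p * δ ^ 2)) ^ n := by
    refine le_trans ?_ hmean
    rw [Finset.mul_sum]
    refine (Finset.sum_le_sum fun a ha => ?_).trans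
      (Finset.sum_le_sum_of_subset_of_nonneg (Finset.filter_subset _ _) fun a _ _ =>
        mul_nonneg (hw0 a) (integral_nonneg (hF0 a)))
    rw [mul_comm]
    exact mul_le_mul_of_nonneg_left (not_le.1 (Finset.mem_filter.1 ha).2).le (hw0 a)
  have hexp : exp (-(5 / 96) * (p * δ ^ 2)) ^ n = T * exp (-(1 / 96) * p * δ ^ 2 * n) := by
    rw [hT, ← exp_add, ← exp_nat_mul]
    congr 1
    ring
  rw [hexp] at hbad
  have := le_of_mul_le_mul_left hbad (exp_pos _)
  linarith
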